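/- Let {ι i : U i → U}_{i ∈ I} be a gluing covering of a topological space U. Define for each pair (i, j) the space W i j := {p : U i × U j | ι i p.1 = ι j p.2} with the subspace topology, the continuous first projection υ i j : W i j → U i, and the continuous swap map φ i j : W i j → W j i, (x, y) ↦ (y, x). Then (U, W, υ, φ) is a topological gluing datum over I (it satisfies axioms (i), (ii), (iii) below), the maps ι i satisfy the cone compatibility ι i ∘ (υ i j) = ι j ∘ (υ j i) ∘ (φ i j), and the unique continuous map μ : Q → U from the glued space Q of this datum satisfying μ ∘ ι' i = ι i for all i (where ι' i : U i → Q are the canonical maps) is a continuous bijection. Moreover, if the covering is a gluing open covering, then μ is a homeomorphism. -/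

import Mathlib

open Set Function Topology

/-- The gluing relation on the sigma type `Σ i, U i` associated with a gluing datum:
`⟨i, x⟩ ~ ⟨j, y⟩` iff there exists `u : W i j` with `υ i j u = x` and `υ j i (φ i j u) = y`. -/
def glueRel {I : Type*} (U : I → Type*) (W : I → I → Type*)
    (υ : ∀ i j, W i j → U i) (φ : ∀ i j, W i j → W j i) :
    (Σ i, U i) → (Σ i, U i) → Prop :=
  fun p q => ∃ u : W p.1 q.1, υ p.1 q.1 u = p.2 ∧ υ q.1 p.1 (φ p.1 q.1 u) = q.2

/-- The glued space: the quotient of `Σ i, U i` by the gluing relation, equipped with the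
quotient topology. -/
abbrev Glued {I : Type*} (U : I → Type*) (W : I → I → Type*)
    (υ : ∀ i j, W i j → U i) (φ : ∀ i j, W i j → W j i) : Type _ :=
  Quot (glueRel U W υ φ)

/-- The canonical map `U i → Q` into the glued space. -/
def glueι {I : Type*} (U : I → Type*) (W : I → I → Type*)
    (υ : ∀ i j, W i j → U i) (φ : ∀ i j, W i j → W j i) (i : I) :
    U i → Glued U W υ φ :=
  fun x => Quot.mk _ ⟨i, x⟩

/-- The overlap piece of two members of a gluing covering, with the subspace topology of the
product. -/
abbrev covW {I : Type*} {U : Type*} (Ui : I → Type*) (ι : ∀ i, Ui i → U)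
    (i j : I) : Type _ :=
  {p : Ui i × Ui j // ι i p.1 = ι j p.2}

/-- The first projection from an overlap piece. -/
def covυ {I : Type*} {U : Type*} (Ui : I → Type*) (ι : ∀ i, Ui i → U)
    (i j : I) : covW Ui ι i j → Ui i :=
  fun p => p.1.1

/-- The swap map between overlap pieces. -/
def covφ {I : Type*} {U : Type*} (Ui : I → Type*) (ι : ∀ i, Ui i → U)
    (i j : I) : covW Ui ι i j → covW Ui ι j i :=
  fun p => ⟨(p.1.2, p.1.1), p.2.symm⟩

/-- A gluing covering of `U` gives rise to a topological gluing datum whose glued space maps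
bijectively (and continuously) onto `U`; for a gluing open covering this canonical map is a
homeomorphism. -/
theorem gluing_covering_gluingDatum {I : Type*}
    (U : Type*) [TopologicalSpace U]
    (Ui : I → Type*) [∀ i, TopologicalSpace (Ui i)]
    (ι : ∀ i, Ui i → U)
    (hιc : ∀ i, Continuous (ι i)) (hιinj : ∀ i, Function.Injective (ι i))
    (hιcov : ⋃ i, Set.range (ι i) = Set.univ) :
    (∀ i j, Continuous (covυ Ui ι i j)) ∧
    (∀ i j, Continuous (covφ Ui ι i j)) ∧
    (∀ i, Function.Bijective (covυ Ui ι i i)) ∧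
    (∀ i (u : covW Ui ι i i), covυ Ui ι i i (covφ Ui ι i i u) = covυ Ui ι i i u) ∧
    (∀ i j (u : covW Ui ι i j), covφ Ui ι j i (covφ Ui ι i j u) = u) ∧
    (∀ i j k (u : covW Ui ι i j) (v : covW Ui ι j k),
      covυ Ui ι j i (covφ Ui ι i j u) = covυ Ui ι j k v →
      ∃ w : covW Ui ι i k, covυ Ui ι i k w = covυ Ui ι i j u ∧
        covυ Ui ι k i (covφ Ui ι i k w) = covυ Ui ι k j (covφ Ui ι j k v)) ∧
    (∀ i j, (ι i) ∘ (covυ Ui ι i j) = (ι j) ∘ (covυ Ui ι j i) ∘ (covφ Ui ι i j)) ∧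
    (∀ μ : Glued Ui (covW Ui ι) (covυ Ui ι) (covφ Ui ι) → U,
      Continuous μ → (∀ i, μ ∘ glueι Ui (covW Ui ι) (covυ Ui ι) (covφ Ui ι) i = ι i) →
      (Continuous μ ∧ Function.Bijective μ) ∧
        ((∀ i, IsOpenMap (ι i)) → IsHomeomorph μ)) := by
  refine ⟨fun i j => continuous_fst.comp continuous_subtype_val, fun i j => ?_, fun i => ⟨?_, ?_⟩,
    fun i u => ?_, fun i j u => rfl, ?_, ?_, ?_⟩
  · exact Continuous.subtype_mk (continuous_swap.comp continuous_subtype_val) _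
  · rintro ⟨⟨a, b⟩, h⟩ ⟨⟨c, d⟩, hcd⟩ e
    have e : a = c := e
    have h1 : a = b := hιinj i h
    have h2 : c = d := hιinj i hcd
    subst h1 h2 e
    rfl
  · exact fun x => ⟨⟨(x, x), rfl⟩, rfl⟩
  · exact (hιinj i u.2).symm
  · rintro i j k ⟨⟨a, b⟩, h⟩ ⟨⟨c, d⟩, hcd⟩ e
    have e : b = c := e
    subst e
    exact ⟨⟨(a, d), Eq.trans h hcd⟩, rfl, rfl⟩
  · exact fun i j => funext fun u => u.2
  · intro μ hμ hc
    have hmk : ∀ i x, μ (Quot.mk _ ⟨i, x⟩) = ι i x := fun i x => congrFun (hc i) x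
    have hbij : Function.Bijective μ := by
      constructor
      · rintro ⟨i, x⟩ ⟨j, y⟩ e
        have exy : ι i x = ι j y := (hmk i x).symm.trans (Eq.trans e (hmk j y))
        exact Quot.sound ⟨⟨(x, y), exy⟩, rfl, rfl⟩
      · intro z
        have hz : z ∈ ⋃ i, Set.range (ι i) := hιcov ▸ Set.mem_univ z
        obtain ⟨i, x, hx⟩ := Set.mem_iUnion.1 hz
        exact ⟨Quot.mk _ ⟨i, x⟩, (hmk i x).trans hx⟩
    refine ⟨⟨hμ, hbij⟩, fun ho => ⟨hμ, ?_, hbij⟩⟩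
    intro s hs
    have key : μ '' s = ⋃ i, ι i '' ((fun x => Quot.mk _ ⟨i, x⟩) ⁻¹' s) := by
      ext z
      simp only [Set.mem_image, Set.mem_iUnion, Set.mem_preimage]
      constructor
      · rintro ⟨⟨i, x⟩, hx, rfl⟩
        exact ⟨i, x, hx, (hmk i x).symm⟩
      · rintro ⟨i, x, hx, rfl⟩
        exact ⟨_, hx, hmk i x⟩
    rw [key]
    exact isOpen_iUnion fun i => ho i _
      (hs.preimage (continuous_quot_mk.comp continuous_sigmaMk))
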